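/- arXiv:2512.20386 — 3 statements merged into one kernel-verified Lean document; each statement's English description precedes it below -/
import Mathlib

section
/- Let A be a symmetric positive definite 2×2 real matrix, let v ≠ w be points of ℝ², let S = {v + t(w−v) : t ∈ [0,1]}, let n be the unit vector obtained by rotating (w−v)/‖w−v‖ clockwise by 90 degrees, and define the anisotropic Dirichlet coordinate φ(η) = (‖w−v‖/(2π√(det A))) ∫₀¹ (1−t) · ((v + t(w−v) − η)·n) / ((v + t(w−v) − η)ᵀ A⁻¹ (v + t(w−v) − η)) dt for η ∈ ℝ² ∖ S. Then φ is infinitely differentiable on ℝ² ∖ S and satisfies div(A ∇φ)(η) = 0 for every η ∉ S. -/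
open Matrix Real MeasureTheory
open scoped RealInnerProductSpace

/-- The divergence of a vector field on `ℝᵈ`: the trace of its Fréchet derivative. -/
noncomputable def adiv {d : ℕ} (F : EuclideanSpace ℝ (Fin d) → EuclideanSpace ℝ (Fin d))
    (x : EuclideanSpace ℝ (Fin d)) : ℝ :=
  LinearMap.trace ℝ (EuclideanSpace ℝ (Fin d)) (fderiv ℝ F x).toLinearMap

/-- The quadratic form `xᵀ M x` associated to a `d × d` matrix. -/
noncomputable def quadForm {d : ℕ} (M : Matrix (Fin d) (Fin d) ℝ)
    (x : EuclideanSpace ℝ (Fin d)) : ℝ :=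
  ∑ i, ∑ j, x i * M i j * x j

/-- Matrix-vector multiplication, acting on Euclidean space. -/
noncomputable def matVec {d : ℕ} (M : Matrix (Fin d) (Fin d) ℝ)
    (x : EuclideanSpace ℝ (Fin d)) : EuclideanSpace ℝ (Fin d) :=
  Matrix.toEuclideanLin M x

/-- Rotation of a vector in `ℝ²` clockwise by 90 degrees: `(x₁, x₂) ↦ (x₂, −x₁)`. -/
noncomputable def rotCW (x : EuclideanSpace ℝ (Fin 2)) : EuclideanSpace ℝ (Fin 2) :=
  (EuclideanSpace.equiv (Fin 2) ℝ).symm ![x 1, -x 0]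

/-!
For symmetric `A` with positive determinant, the symbol `∑ Aᵢⱼ ξᵢ ξⱼ` factors over `ℂ`: it vanishes
at `ξ = (ℓ e₀, ℓ e₁)` for an injective real-linear map `ℓ : ℝ² → ℂ`. By the chain rule,
`div (A ∇ Re (g ∘ ℓ)) = Re (g'' ∘ ℓ · ∑ Aᵢⱼ (ℓ eᵢ) (ℓ eⱼ)) = 0` for every holomorphic `g`.
Moreover `Re (ℓ (A n) · conj (ℓ x))` and `|ℓ x|²` are the same multiple of `⟪x, n⟫` and
`xᵀ A⁻¹ x`, so the kernel `⟪x, n⟫ / xᵀ A⁻¹ x` is `Re (ℓ (A n) / ℓ x)`, and integrating it against a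
density gives the real part of a Cauchy transform, which is holomorphic away from its curve.
-/

open scoped ComplexConjugate Topology

section CauchyTransform

variable {α : Type*} [MeasurableSpace α] {μ : Measure α}

theorem exists_pos_ae_forall_mem_ball_le_dist {X : Type*} [PseudoMetricSpace X] {γ : α → X}
    {U : Set X} (hU : IsOpen U) (hγU : ∀ᵐ t ∂μ, γ t ∉ U) {z : X} (hz : z ∈ U) :
    ∃ δ > 0, ∀ᵐ t ∂μ, ∀ x ∈ Metric.ball z δ, δ ≤ dist (γ t) x := by
  obtain ⟨r, hr, hball⟩ := Metric.isOpen_iff.1 hU z hz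
  refine ⟨r / 2, half_pos hr, ?_⟩
  filter_upwards [hγU] with t ht x hx
  have hr_le : r ≤ dist (γ t) z := not_lt.1 fun h => ht (hball h)
  linarith [dist_triangle (γ t) x z, Metric.mem_ball.1 hx]

/-- The Cauchy transform of the complex measure `f μ` transported by `γ`; for `μ` Lebesgue measure
on an interval this is a Cauchy-type integral along the curve `γ`. -/
noncomputable def cauchyTransform (μ : Measure α) (γ f : α → ℂ) (z : ℂ) : ℂ :=
  ∫ t, f t / (γ t - z) ∂μ

variable {γ f : α → ℂ} {U : Set ℂ} {z : ℂ}

theorem integrable_div_sub (hf : Integrable f μ) (hγ : AEStronglyMeasurable γ μ)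
    (hU : IsOpen U) (hγU : ∀ᵐ t ∂μ, γ t ∉ U) (hz : z ∈ U) :
    Integrable (fun t => f t / (γ t - z)) μ := by
  obtain ⟨δ, hδ, hdist⟩ := exists_pos_ae_forall_mem_ball_le_dist hU hγU hz
  refine (hf.norm.div_const δ).mono' (hf.1.div₀ (hγ.sub aestronglyMeasurable_const)) ?_
  filter_upwards [hdist] with t ht
  have hle : δ ≤ ‖γ t - z‖ := dist_eq_norm (γ t) z ▸ ht z (Metric.mem_ball_self hδ)
  rw [norm_div]
  gcongr

theorem hasDerivAt_div_sub {𝕜 : Type*} [NontriviallyNormedField 𝕜] (c : 𝕜) {p z : 𝕜}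
    (h : p - z ≠ 0) : HasDerivAt (fun x => c / (p - x)) (c / (p - z) ^ 2) z := by
  simpa using (hasDerivAt_const z c).fun_div ((hasDerivAt_id z).const_sub p) h

theorem differentiableOn_cauchyTransform (hf : Integrable f μ) (hγ : AEStronglyMeasurable γ μ)
    (hU : IsOpen U) (hγU : ∀ᵐ t ∂μ, γ t ∉ U) :
    DifferentiableOn ℂ (cauchyTransform μ γ f) U := by
  intro z hz
  obtain ⟨δ, hδ, hdist⟩ := exists_pos_ae_forall_mem_ball_le_dist hU hγU hz
  simp only [dist_eq_norm] at hdist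
  have hmeas (k : ℕ) (x : ℂ) : AEStronglyMeasurable (fun t => f t / (γ t - x) ^ k) μ :=
    hf.1.div₀ ((hγ.sub aestronglyMeasurable_const).pow k)
  have hderiv : HasDerivAt (cauchyTransform μ γ f) (∫ t, f t / (γ t - z) ^ 2 ∂μ) z := by
    refine (hasDerivAt_integral_of_dominated_loc_of_deriv_le (Metric.ball_mem_nhds z hδ)
      (F' := fun x t => f t / (γ t - x) ^ 2) (bound := fun t => ‖f t‖ / δ ^ 2)
      (.of_forall fun x => by simpa using hmeas 1 x) (integrable_div_sub hf hγ hU hγU hz)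
      (hmeas 2 z) ?_ (hf.norm.div_const _) ?_).2
    · filter_upwards [hdist] with t ht x hx
      rw [norm_div, norm_pow]
      gcongr
      exact ht x hx
    · filter_upwards [hdist] with t ht x hx
      exact hasDerivAt_div_sub (f t) (norm_pos_iff.1 (hδ.trans_le (ht x hx)))
  exact hderiv.differentiableAt.differentiableWithinAt

end CauchyTransform

section SecondOrderOperator

variable {d : ℕ} (A : Matrix (Fin d) (Fin d) ℝ)

theorem matVec_apply (x : EuclideanSpace ℝ (Fin d)) (i : Fin d) :
    matVec A x i = ∑ j, A i j * x j :=
  rfl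

theorem quadForm_eq_inner_matVec (x : EuclideanSpace ℝ (Fin d)) :
    quadForm A x = ⟪x, matVec A x⟫ := by
  simp only [quadForm, PiLp.inner_apply, matVec_apply, RCLike.inner_apply, conj_trivial,
    Finset.sum_mul]
  exact Finset.sum_congr rfl fun i _ => Finset.sum_congr rfl fun j _ => by ring

variable {A} in
theorem matVec_matVec_inv (hA : IsUnit A.det) (x : EuclideanSpace ℝ (Fin d)) :
    matVec A (matVec A⁻¹ x) = x := by
  simp only [matVec, Matrix.toLpLin_apply, Matrix.mulVec_mulVec, Matrix.mul_nonsing_inv A hA,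
    Matrix.one_mulVec]

theorem gradient_apply_eq_fderiv_single (f : EuclideanSpace ℝ (Fin d) → ℝ)
    (x : EuclideanSpace ℝ (Fin d)) (j : Fin d) :
    gradient f x j = fderiv ℝ f x (EuclideanSpace.single j 1) := by
  rw [← inner_gradient_left (𝕜 := ℝ), EuclideanSpace.inner_single_right]
  simp

theorem adiv_eq_sum_fderiv_apply {F : EuclideanSpace ℝ (Fin d) → EuclideanSpace ℝ (Fin d)}
    {x : EuclideanSpace ℝ (Fin d)} (hF : DifferentiableAt ℝ F x) :
    adiv F x = ∑ i, fderiv ℝ (fun y => F y i) x (EuclideanSpace.single i 1) := by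
  rw [adiv, LinearMap.trace_eq_sum_inner _ (EuclideanSpace.basisFun (Fin d) ℝ)]
  refine Finset.sum_congr rfl fun i _ => ?_
  have hcoord : HasFDerivAt (fun y => F y i)
      ((EuclideanSpace.proj i : _ →L[ℝ] ℝ) ∘L fderiv ℝ F x) x :=
    (EuclideanSpace.proj i : _ →L[ℝ] ℝ).hasFDerivAt.comp x hF.hasFDerivAt
  simp [hcoord.fderiv, EuclideanSpace.inner_single_left]

variable {f g : EuclideanSpace ℝ (Fin d) → ℝ} {x : EuclideanSpace ℝ (Fin d)}

theorem adiv_matVec_gradient (hf : DifferentiableAt ℝ (fderiv ℝ f) x) :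
    adiv (fun y => matVec A (gradient f y)) x =
      ∑ i, ∑ j, A i j * fderiv ℝ (fun y => fderiv ℝ f y (EuclideanSpace.single j 1)) x
        (EuclideanSpace.single i 1) := by
  have hpartial (j : Fin d) :
      DifferentiableAt ℝ (fun y => fderiv ℝ f y (EuclideanSpace.single j 1)) x :=
    hf.clm_apply (differentiableAt_const _)
  have hcomp (i : Fin d) : (fun y => matVec A (gradient f y) i) =
      fun y => ∑ j, A i j * fderiv ℝ f y (EuclideanSpace.single j 1) := by
    simp only [matVec_apply, gradient_apply_eq_fderiv_single]
  have hF : DifferentiableAt ℝ (fun y => matVec A (gradient f y)) x := by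
    refine differentiableAt_euclidean.2 fun i => ?_
    rw [hcomp]
    fun_prop
  rw [adiv_eq_sum_fderiv_apply hF]
  refine Finset.sum_congr rfl fun i _ => ?_
  rw [hcomp, fderiv_fun_sum fun j _ => (hpartial j).const_mul _]
  simp [fderiv_const_mul (hpartial _)]

theorem adiv_matVec_gradient_congr (h : f =ᶠ[𝓝 x] g) :
    adiv (fun y => matVec A (gradient f y)) x = adiv (fun y => matVec A (gradient g y)) x := by
  have hgrad : (fun y => matVec A (gradient f y)) =ᶠ[𝓝 x] fun y => matVec A (gradient g y) := by
    filter_upwards [h.eventuallyEq_nhds] with y hy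
    rw [gradient, gradient, hy.fderiv_eq]
  rw [adiv, adiv, hgrad.fderiv_eq]

end SecondOrderOperator

section ReCompLinear

variable {E : Type*} [NormedAddCommGroup E] [NormedSpace ℝ E] {ℓ : E →L[ℝ] ℂ} {g : ℂ → ℂ} {x : E}

theorem fderiv_re_comp_apply (hg : DifferentiableAt ℂ g (ℓ x)) (u : E) :
    fderiv ℝ (fun y => (g (ℓ y)).re) x u = (deriv g (ℓ x) * ℓ u).re := by
  have h : HasFDerivAt (fun y => (g (ℓ y)).re) (Complex.reCLM ∘L (deriv g (ℓ x) • ℓ)) x :=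
    Complex.reCLM.hasFDerivAt.comp x (hg.hasDerivAt.comp_hasFDerivAt x ℓ.hasFDerivAt)
  simp [h.fderiv]

theorem fderiv_fderiv_re_comp_apply (hg : AnalyticAt ℂ g (ℓ x)) (u v : E) :
    fderiv ℝ (fun y => fderiv ℝ (fun y' => (g (ℓ y')).re) y v) x u =
      (deriv (deriv g) (ℓ x) * (ℓ u * ℓ v)).re := by
  have hfirst : (fun y => fderiv ℝ (fun y' => (g (ℓ y')).re) y v) =ᶠ[𝓝 x]
      fun y => (deriv g (ℓ y) * ℓ v).re := by
    filter_upwards [ℓ.continuous.continuousAt.eventually hg.eventually_analyticAt] with y hy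
    exact fderiv_re_comp_apply hy.differentiableAt v
  have hdiff : DifferentiableAt ℂ (deriv g) (ℓ x) := hg.deriv.differentiableAt
  rw [hfirst.fderiv_eq, fderiv_re_comp_apply (g := fun z => deriv g z * ℓ v) (hdiff.mul_const _),
    deriv_mul_const hdiff, mul_assoc, mul_comm (ℓ v)]

theorem contDiffAt_re_comp (hg : AnalyticAt ℂ g (ℓ x)) {k : WithTop ℕ∞} :
    ContDiffAt ℝ k (fun y => (g (ℓ y)).re) x :=
  Complex.reCLM.contDiff.contDiffAt.comp x
    ((hg.contDiffAt.restrict_scalars ℝ).comp x ℓ.contDiff.contDiffAt)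

end ReCompLinear

theorem adiv_matVec_gradient_re_comp_eq_zero {d : ℕ} {A : Matrix (Fin d) (Fin d) ℝ}
    {ℓ : EuclideanSpace ℝ (Fin d) →L[ℝ] ℂ} {g : ℂ → ℂ} {x : EuclideanSpace ℝ (Fin d)}
    (hℓ : ∑ i, ∑ j, (A i j : ℂ) *
      (ℓ (EuclideanSpace.single i 1) * ℓ (EuclideanSpace.single j 1)) = 0)
    (hg : AnalyticAt ℂ g (ℓ x)) :
    adiv (fun y => matVec A (gradient (fun y' => (g (ℓ y')).re) y)) x = 0 := by
  have hdiff : DifferentiableAt ℝ (fderiv ℝ fun y => (g (ℓ y)).re) x :=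
    ((contDiffAt_re_comp hg (k := 2)).fderiv_right (m := 1) (by norm_num)).differentiableAt
      one_ne_zero
  calc adiv (fun y => matVec A (gradient (fun y' => (g (ℓ y')).re) y)) x
      = ∑ i, ∑ j, A i j * (deriv (deriv g) (ℓ x) *
          (ℓ (EuclideanSpace.single i 1) * ℓ (EuclideanSpace.single j 1))).re := by
        simp only [adiv_matVec_gradient A hdiff, fderiv_fderiv_re_comp_apply hg]
    _ = (deriv (deriv g) (ℓ x) * ∑ i, ∑ j, (A i j : ℂ) *
          (ℓ (EuclideanSpace.single i 1) * ℓ (EuclideanSpace.single j 1))).re := by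
        simp only [← Complex.re_ofReal_mul, ← Complex.re_sum, Finset.mul_sum, mul_left_comm]
    _ = 0 := by rw [hℓ, mul_zero, Complex.zero_re]

section CharacteristicCoord

/-- A real-linear coordinate `ℝ² → ℂ` in which `div (A ∇ ·)` becomes a multiple of the Laplacian:
its values at the basis vectors form a zero of `A₀₀ ξ₀² + 2 A₀₁ ξ₀ ξ₁ + A₁₁ ξ₁²`. -/
noncomputable def characteristicCoord (A : Matrix (Fin 2) (Fin 2) ℝ) :
    EuclideanSpace ℝ (Fin 2) →L[ℝ] ℂ :=
  (EuclideanSpace.proj 0).smulRight (⟨-A 0 1, √A.det⟩ : ℂ) +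
    (EuclideanSpace.proj 1).smulRight (A 0 0 : ℂ)

variable {A : Matrix (Fin 2) (Fin 2) ℝ}

theorem characteristicCoord_re (x : EuclideanSpace ℝ (Fin 2)) :
    (characteristicCoord A x).re = A 0 0 * x 1 - A 0 1 * x 0 := by
  simp [characteristicCoord, sub_eq_neg_add, mul_comm]

theorem characteristicCoord_im (x : EuclideanSpace ℝ (Fin 2)) :
    (characteristicCoord A x).im = √A.det * x 0 := by
  simp [characteristicCoord, mul_comm]

theorem sq_sqrt_det_of_isSymm (hA : A.IsSymm) (hdet : 0 ≤ A.det) :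
    √A.det ^ 2 = A 0 0 * A 1 1 - A 0 1 ^ 2 := by
  rw [Real.sq_sqrt hdet, Matrix.det_fin_two, hA.apply 0 1, sq]

theorem apply_zero_zero_ne_zero_of_det_pos (hA : A.IsSymm) (hdet : 0 < A.det) : A 0 0 ≠ 0 := by
  intro h
  rw [Matrix.det_fin_two, hA.apply 0 1, h] at hdet
  nlinarith [sq_nonneg (A 0 1)]

theorem sum_mul_characteristicCoord_single_eq_zero (hA : A.IsSymm) (hdet : 0 ≤ A.det) :
    ∑ i, ∑ j, (A i j : ℂ) * (characteristicCoord A (EuclideanSpace.single i 1) *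
      characteristicCoord A (EuclideanSpace.single j 1)) = 0 := by
  have hzero : characteristicCoord A (EuclideanSpace.single 0 1) = -A 0 1 + √A.det * Complex.I := by
    apply Complex.ext <;> simp [characteristicCoord_re, characteristicCoord_im]
  have hone : characteristicCoord A (EuclideanSpace.single 1 1) = A 0 0 := by
    apply Complex.ext <;> simp [characteristicCoord_re, characteristicCoord_im]
  have hsqrt : (√A.det : ℂ) ^ 2 = A 0 0 * A 1 1 - A 0 1 ^ 2 := by
    exact_mod_cast sq_sqrt_det_of_isSymm hA hdet
  simp only [Fin.sum_univ_two, hA.apply 0 1, hzero, hone]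
  linear_combination (A 0 0 * √A.det ^ 2 : ℂ) * Complex.I_sq - (A 0 0 : ℂ) * hsqrt

theorem re_characteristicCoord_matVec_mul_conj (hA : A.IsSymm) (hdet : 0 ≤ A.det)
    (n x : EuclideanSpace ℝ (Fin 2)) :
    (characteristicCoord A (matVec A n) * conj (characteristicCoord A x)).re =
      A 0 0 * A.det * ⟪x, n⟫ := by
  simp only [Complex.mul_re, Complex.conj_re, Complex.conj_im, characteristicCoord_re,
    characteristicCoord_im, matVec_apply, PiLp.inner_apply, Fin.sum_univ_two, hA.apply 0 1,
    RCLike.inner_apply, conj_trivial]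
  linear_combination (-n 1 * (A 0 0 * x 1 - A 0 1 * x 0)) * sq_sqrt_det_of_isSymm hA hdet +
    A 0 0 * (n 0 * x 0 + n 1 * x 1) * Real.sq_sqrt hdet

theorem normSq_characteristicCoord (hA : A.IsSymm) (hdet : 0 < A.det)
    (x : EuclideanSpace ℝ (Fin 2)) :
    Complex.normSq (characteristicCoord A x) = A 0 0 * A.det * quadForm A⁻¹ x := by
  have h := re_characteristicCoord_matVec_mul_conj hA hdet.le (matVec A⁻¹ x) x
  rwa [matVec_matVec_inv hdet.ne'.isUnit, Complex.mul_conj, Complex.ofReal_re,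
    ← quadForm_eq_inner_matVec] at h

theorem characteristicCoord_injective (hA : A.IsSymm) (hdet : 0 < A.det) :
    Function.Injective (characteristicCoord A) := by
  refine (injective_iff_map_eq_zero _).2 fun x hx => ?_
  have h := re_characteristicCoord_matVec_mul_conj hA hdet.le x x
  simpa [hx, apply_zero_zero_ne_zero_of_det_pos hA hdet, hdet.ne'] using h

theorem isOpenMap_characteristicCoord (hA : A.IsSymm) (hdet : 0 < A.det) :
    IsOpenMap (characteristicCoord A) := by
  have hsurj : Function.Surjective (characteristicCoord A) :=
    (LinearMap.injective_iff_surjective_of_finrank_eq_finrank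
      (f := (characteristicCoord A).toLinearMap) (by simp)).1
      (characteristicCoord_injective hA hdet)
  exact (characteristicCoord A).isOpenMap hsurj

theorem inner_div_quadForm_inv_eq_re (hA : A.IsSymm) (hdet : 0 < A.det)
    (x n : EuclideanSpace ℝ (Fin 2)) :
    ⟪x, n⟫ / quadForm A⁻¹ x =
      (characteristicCoord A (matVec A n) / characteristicCoord A x).re := by
  have hscale : A 0 0 * A.det ≠ 0 :=
    mul_ne_zero (apply_zero_zero_ne_zero_of_det_pos hA hdet) hdet.ne'
  calc ⟪x, n⟫ / quadForm A⁻¹ x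
      = A 0 0 * A.det * ⟪x, n⟫ / (A 0 0 * A.det * quadForm A⁻¹ x) :=
        (mul_div_mul_left _ _ hscale).symm
    _ = (characteristicCoord A (matVec A n) * conj (characteristicCoord A x)).re /
          Complex.normSq (characteristicCoord A x) := by
        rw [re_characteristicCoord_matVec_mul_conj hA hdet.le, normSq_characteristicCoord hA hdet]
    _ = (characteristicCoord A (matVec A n) / characteristicCoord A x).re := by
        simp [Complex.div_re, add_div]

end CharacteristicCoord

section DoubleLayerPotential

variable {α : Type*} [MeasurableSpace α] {μ : Measure α} {A : Matrix (Fin 2) (Fin 2) ℝ}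
  {γ ν : α → EuclideanSpace ℝ (Fin 2)} {V : Set (EuclideanSpace ℝ (Fin 2))}

/-- The double-layer potential of `div (A ∇ ·)`, up to the constant `(2π √(det A))⁻¹`, of sources at
`γ t` weighted by `μ`. The vector `ν t` is the normal direction at `γ t` scaled by the density. -/
noncomputable def doubleLayerPotential (A : Matrix (Fin 2) (Fin 2) ℝ) (μ : Measure α)
    (γ ν : α → EuclideanSpace ℝ (Fin 2)) (η : EuclideanSpace ℝ (Fin 2)) : ℝ :=
  ∫ t, ⟪γ t - η, ν t⟫ / quadForm A⁻¹ (γ t - η) ∂μ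

theorem exists_eqOn_doubleLayerPotential_re_comp (hA : A.IsSymm) (hdet : 0 < A.det)
    (hγ : AEStronglyMeasurable γ μ) (hν : Integrable ν μ) (hV : IsOpen V)
    (hγV : ∀ᵐ t ∂μ, γ t ∉ V) :
    ∃ g : ℂ → ℂ, (∀ η ∈ V, AnalyticAt ℂ g (characteristicCoord A η)) ∧
      Set.EqOn (doubleLayerPotential A μ γ ν) (fun η => (g (characteristicCoord A η)).re) V := by
  set ℓ := characteristicCoord A
  have hU : IsOpen (ℓ '' V) := isOpenMap_characteristicCoord hA hdet V hV
  have hγU : ∀ᵐ t ∂μ, ℓ (γ t) ∉ ℓ '' V := by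
    filter_upwards [hγV] with t ht
    rwa [(characteristicCoord_injective hA hdet).mem_set_image]
  have hℓγ : AEStronglyMeasurable (fun t => ℓ (γ t)) μ := ℓ.continuous.comp_aestronglyMeasurable hγ
  have hdensity : Integrable (fun t => ℓ (matVec A (ν t))) μ :=
    (ℓ ∘L (Matrix.toEuclideanLin A).toContinuousLinearMap).integrable_comp hν
  refine ⟨cauchyTransform μ (fun t => ℓ (γ t)) fun t => ℓ (matVec A (ν t)), fun η hη => ?_,
    fun η hη => ?_⟩
  · exact (differentiableOn_cauchyTransform hdensity hℓγ hU hγU).analyticAt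
      (hU.mem_nhds (Set.mem_image_of_mem ℓ hη))
  · have hint := integrable_div_sub hdensity hℓγ hU hγU (Set.mem_image_of_mem ℓ hη)
    simp only [doubleLayerPotential, inner_div_quadForm_inv_eq_re hA hdet, map_sub]
    exact Complex.reCLM.integral_comp_comm hint

theorem contDiffOn_doubleLayerPotential (hA : A.IsSymm) (hdet : 0 < A.det)
    (hγ : AEStronglyMeasurable γ μ) (hν : Integrable ν μ) (hV : IsOpen V)
    (hγV : ∀ᵐ t ∂μ, γ t ∉ V) {k : WithTop ℕ∞} :
    ContDiffOn ℝ k (doubleLayerPotential A μ γ ν) V := by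
  obtain ⟨g, hg, heq⟩ := exists_eqOn_doubleLayerPotential_re_comp hA hdet hγ hν hV hγV
  exact ContDiffOn.congr (fun η hη => (contDiffAt_re_comp (hg η hη)).contDiffWithinAt) heq

theorem adiv_matVec_gradient_doubleLayerPotential_eq_zero (hA : A.IsSymm) (hdet : 0 < A.det)
    (hγ : AEStronglyMeasurable γ μ) (hν : Integrable ν μ) (hV : IsOpen V)
    (hγV : ∀ᵐ t ∂μ, γ t ∉ V) {η : EuclideanSpace ℝ (Fin 2)} (hη : η ∈ V) :
    adiv (fun ζ => matVec A (gradient (doubleLayerPotential A μ γ ν) ζ)) η = 0 := by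
  obtain ⟨g, hg, heq⟩ := exists_eqOn_doubleLayerPotential_re_comp hA hdet hγ hν hV hγV
  rw [adiv_matVec_gradient_congr A (heq.eventuallyEq_of_mem (hV.mem_nhds hη))]
  exact adiv_matVec_gradient_re_comp_eq_zero
    (sum_mul_characteristicCoord_single_eq_zero hA hdet.le) (hg η hη)

theorem const_mul_intervalIntegral_eq_doubleLayerPotential (A : Matrix (Fin 2) (Fin 2) ℝ)
    (γ n : ℝ → EuclideanSpace ℝ (Fin 2)) (ρ : ℝ → ℝ) (C : ℝ) {a b : ℝ} (hab : a ≤ b)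
    (η : EuclideanSpace ℝ (Fin 2)) :
    C * ∫ t in a..b, ρ t * ⟪γ t - η, n t⟫ / quadForm A⁻¹ (γ t - η) =
      doubleLayerPotential A (volume.restrict (Set.Ioc a b)) γ (fun t => C • ρ t • n t) η := by
  simp only [doubleLayerPotential, real_inner_smul_right, intervalIntegral.integral_of_le hab,
    ← integral_const_mul, mul_div_assoc]

end DoubleLayerPotential

theorem anisotropic_dirichlet_coordinate_smooth_and_harmonic_general
    {A : Matrix (Fin 2) (Fin 2) ℝ} (hA : A.IsSymm) (hdet : 0 < A.det)
    {γ n : ℝ → EuclideanSpace ℝ (Fin 2)} {ρ : ℝ → ℝ} {a b : ℝ} (hab : a ≤ b)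
    (hγ : ContinuousOn γ (Set.Icc a b))
    (hρn : IntervalIntegrable (fun t => ρ t • n t) volume a b) (C : ℝ) :
    ContDiffOn ℝ (⊤ : ℕ∞)
      (fun η => C * ∫ t in a..b, ρ t * ⟪γ t - η, n t⟫ / quadForm A⁻¹ (γ t - η))
      (γ '' Set.Icc a b)ᶜ
    ∧ ∀ η ∉ γ '' Set.Icc a b,
        adiv (fun ζ => matVec A (gradient
          (fun ζ' => C * ∫ t in a..b, ρ t * ⟪γ t - ζ', n t⟫ / quadForm A⁻¹ (γ t - ζ')) ζ))
          η = 0 := by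
  simp only [const_mul_intervalIntegral_eq_doubleLayerPotential A γ n ρ C hab]
  have hγ_meas : AEStronglyMeasurable γ (volume.restrict (Set.Ioc a b)) :=
    (hγ.mono Set.Ioc_subset_Icc_self).aestronglyMeasurable measurableSet_Ioc
  have hopen : IsOpen (γ '' Set.Icc a b)ᶜ :=
    (isCompact_Icc.image_of_continuousOn hγ).isClosed.isOpen_compl
  have hmem : ∀ᵐ t ∂volume.restrict (Set.Ioc a b), γ t ∉ (γ '' Set.Icc a b)ᶜ := by
    filter_upwards [ae_restrict_mem measurableSet_Ioc] with t ht
    exact not_not_intro (Set.mem_image_of_mem γ (Set.Ioc_subset_Icc_self ht))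
  exact ⟨contDiffOn_doubleLayerPotential hA hdet hγ_meas (hρn.1.smul C) hopen hmem,
    fun η hη => adiv_matVec_gradient_doubleLayerPotential_eq_zero hA hdet hγ_meas (hρn.1.smul C)
      hopen hmem hη⟩

/-- The anisotropic Dirichlet coordinate
`φ(η) = (‖w−v‖/(2π√(det A))) ∫₀¹ (1−t) ((v+t(w−v)−η)·n) / ((v+t(w−v)−η)ᵀ A⁻¹ (v+t(w−v)−η)) dt`,
where `n` is the clockwise 90° rotation of the unit tangent of the segment from `v` to `w`,
is infinitely differentiable outside the segment and satisfies `div(A ∇φ)(η) = 0` there. -/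
theorem anisotropic_dirichlet_coordinate_smooth_and_harmonic
    (A : Matrix (Fin 2) (Fin 2) ℝ) (hA : A.PosDef) (hAsymm : A.IsSymm)
    (v w : EuclideanSpace ℝ (Fin 2)) (hvw : v ≠ w)
    (n : EuclideanSpace ℝ (Fin 2)) (hn : n = rotCW (‖w - v‖⁻¹ • (w - v))) :
    ContDiffOn ℝ (⊤ : ℕ∞)
      (fun η : EuclideanSpace ℝ (Fin 2) =>
        (‖w - v‖ / (2 * π * Real.sqrt A.det)) *
          ∫ t in (0:ℝ)..1,
            (1 - t) * ⟪v + t • (w - v) - η, n⟫ / quadForm A⁻¹ (v + t • (w - v) - η))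
      ((fun t : ℝ => v + t • (w - v)) '' Set.Icc (0 : ℝ) 1)ᶜ
    ∧ ∀ η : EuclideanSpace ℝ (Fin 2),
        η ∉ (fun t : ℝ => v + t • (w - v)) '' Set.Icc (0 : ℝ) 1 →
        adiv (fun ζ => matVec A (gradient
          (fun ζ' => (‖w - v‖ / (2 * π * Real.sqrt A.det)) *
            ∫ t in (0:ℝ)..1,
              (1 - t) * ⟪v + t • (w - v) - ζ', n⟫ / quadForm A⁻¹ (v + t • (w - v) - ζ')) ζ))
          η = 0 := by
  exact anisotropic_dirichlet_coordinate_smooth_and_harmonic_general hAsymm hA.det_pos zero_le_one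
    (by fun_prop) (Continuous.intervalIntegrable (by fun_prop) 0 1) _
end

section
/- Let A be a symmetric positive definite 3×3 real matrix, let v₁, v₂, v₃ ∈ ℝ³ be affinely independent, let n = ((v₂−v₁) × (v₃−v₁)) / ‖(v₂−v₁) × (v₃−v₁)‖ be the unit normal of the triangle, let T = {(s,t) : s ≥ 0, t ≥ 0, s+t ≤ 1}, ξ(s,t) = v₁ + s(v₂−v₁) + t(v₃−v₁), and let η ∈ ℝ³ lie outside the closed triangle {ξ(s,t) : (s,t) ∈ T}. Set vᵢ' = A^{-1/2}vᵢ. Then (‖(v₂−v₁) × (v₃−v₁)‖ / (4π√(det A))) ∬_T ((ξ(s,t)−η)ᵀ A⁻¹ (ξ(s,t)−η))^{-1/2} ds dt = (1/√(nᵀ A n)) · (‖(v₂'−v₁') × (v₃'−v₁')‖ / (4π)) ∬_T ‖A^{-1/2}(ξ(s,t)−η)‖⁻¹ ds dt; that is, the anisotropic Neumann boundary integral over the triangle equals 1/√(nᵀAn) times the isotropic integral over the A^{-1/2}-transformed triangle. -/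
open Matrix Real MeasureTheory

/-- The cross product on Euclidean `ℝ³`. -/
noncomputable def cross3 (u v : EuclideanSpace ℝ (Fin 3)) : EuclideanSpace ℝ (Fin 3) :=
  (EuclideanSpace.equiv (Fin 3) ℝ).symm
    (crossProduct ((EuclideanSpace.equiv (Fin 3) ℝ) u) ((EuclideanSpace.equiv (Fin 3) ℝ) v))

/-- The standard 2-simplex `T = {(s,t) : s ≥ 0, t ≥ 0, s + t ≤ 1} ⊆ ℝ²`. -/
def simplexT : Set (ℝ × ℝ) := {p | 0 ≤ p.1 ∧ 0 ≤ p.2 ∧ p.1 + p.2 ≤ 1}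

/-!
Write `A = B Bᵀ`. Since `xᵀ A⁻¹ x = ‖B⁻¹ x‖²`, the two integrands agree pointwise, and only the
prefactors have to be compared. Expanding a triple product as a determinant gives
`Bᵀ (u × w) = det B • (B⁻¹ u × B⁻¹ w)`. For the edge vectors `u`, `w` of the triangle, the norm of
the left-hand side is `√(nᵀ A n) ‖u × w‖` and that of the right-hand side is
`√(det A) ‖B⁻¹ u × B⁻¹ w‖`.
-/

section CrossProduct

variable {R : Type*} [CommRing R]

theorem mulVec_triple_product (M : Matrix (Fin 3) (Fin 3) R) (x u w : Fin 3 → R) :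
    (M *ᵥ x) ⬝ᵥ ((M *ᵥ u) ⨯₃ (M *ᵥ w)) = M.det * (x ⬝ᵥ (u ⨯₃ w)) := by
  have rows_mulVec : of ![M *ᵥ x, M *ᵥ u, M *ᵥ w] = of ![x, u, w] * Mᵀ := by
    ext i j
    fin_cases i <;> simp [mul_apply, mulVec, dotProduct, mul_comm]
  calc (M *ᵥ x) ⬝ᵥ ((M *ᵥ u) ⨯₃ (M *ᵥ w))
      = (of ![M *ᵥ x, M *ᵥ u, M *ᵥ w]).det := triple_product_eq_det _ _ _
    _ = (of ![x, u, w]).det * M.det := by rw [rows_mulVec, det_mul, det_transpose]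
    _ = (x ⬝ᵥ (u ⨯₃ w)) * M.det := congrArg (· * M.det) (triple_product_eq_det x u w).symm
    _ = M.det * (x ⬝ᵥ (u ⨯₃ w)) := mul_comm _ _

theorem transpose_mulVec_crossProduct (M : Matrix (Fin 3) (Fin 3) R) (u w : Fin 3 → R) :
    Mᵀ *ᵥ ((M *ᵥ u) ⨯₃ (M *ᵥ w)) = M.det • (u ⨯₃ w) := by
  refine dotProduct_eq _ _ fun x => ?_
  rw [mulVec_transpose, ← dotProduct_mulVec, dotProduct_comm, mulVec_triple_product,
    smul_dotProduct, smul_eq_mul, dotProduct_comm x]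

end CrossProduct

section MatVec

variable {d : ℕ}

theorem matVec_sub (M : Matrix (Fin d) (Fin d) ℝ) (x y : EuclideanSpace ℝ (Fin d)) :
    matVec M (x - y) = matVec M x - matVec M y :=
  map_sub _ x y

theorem matVec_smul (M : Matrix (Fin d) (Fin d) ℝ) (c : ℝ) (x : EuclideanSpace ℝ (Fin d)) :
    matVec M (c • x) = c • matVec M x :=
  map_smul _ c x

theorem matVec_matVec_inv_s16 {M : Matrix (Fin d) (Fin d) ℝ} (hM : IsUnit M.det)
    (x : EuclideanSpace ℝ (Fin d)) : matVec M (matVec M⁻¹ x) = x := by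
  simp [matVec, toLpLin_apply, mulVec_mulVec, mul_nonsing_inv M hM]

theorem matVec_ne_zero {M : Matrix (Fin d) (Fin d) ℝ} (hM : IsUnit M.det)
    {x : EuclideanSpace ℝ (Fin d)} (hx : x ≠ 0) : matVec M x ≠ 0 := fun hMx =>
  hx <| congrArg (WithLp.toLp 2) <|
    eq_zero_of_mulVec_eq_zero hM.ne_zero (congrArg WithLp.ofLp hMx : M *ᵥ x.ofLp = 0)

theorem quadForm_eq_dotProduct (M : Matrix (Fin d) (Fin d) ℝ) (x : EuclideanSpace ℝ (Fin d)) :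
    quadForm M x = x.ofLp ⬝ᵥ (M *ᵥ x.ofLp) := by
  simp only [quadForm, dotProduct, mulVec, Finset.mul_sum, mul_assoc]

theorem quadForm_transpose_mul_self (M : Matrix (Fin d) (Fin d) ℝ)
    (x : EuclideanSpace ℝ (Fin d)) : quadForm (Mᵀ * M) x = ‖matVec M x‖ ^ 2 := by
  rw [quadForm_eq_dotProduct, ← mulVec_mulVec, dotProduct_mulVec, vecMul_transpose,
    EuclideanSpace.real_norm_sq_eq]
  simp only [matVec, ofLp_toLpLin, toLin'_apply, dotProduct, sq]

theorem sqrt_quadForm_mul_transpose (B : Matrix (Fin d) (Fin d) ℝ)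
    (x : EuclideanSpace ℝ (Fin d)) : √(quadForm (B * Bᵀ) x) = ‖matVec Bᵀ x‖ := by
  have quadForm_eq_sq : quadForm (B * Bᵀ) x = ‖matVec Bᵀ x‖ ^ 2 := by
    simpa only [transpose_transpose] using quadForm_transpose_mul_self Bᵀ x
  rw [quadForm_eq_sq, Real.sqrt_sq (norm_nonneg _)]

theorem sqrt_quadForm_mul_transpose_ne_zero {B : Matrix (Fin d) (Fin d) ℝ} (hB : IsUnit B.det)
    {x : EuclideanSpace ℝ (Fin d)} (hx : x ≠ 0) : √(quadForm (B * Bᵀ) x) ≠ 0 := by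
  rw [sqrt_quadForm_mul_transpose, norm_ne_zero_iff]
  exact matVec_ne_zero (B.isUnit_det_transpose hB) hx

theorem quadForm_inv_mul_transpose (B : Matrix (Fin d) (Fin d) ℝ)
    (x : EuclideanSpace ℝ (Fin d)) : quadForm (B * Bᵀ)⁻¹ x = ‖matVec B⁻¹ x‖ ^ 2 := by
  rw [Matrix.mul_inv_rev, ← transpose_nonsing_inv, quadForm_transpose_mul_self]

theorem quadForm_inv_mul_transpose_rpow_neg_half (B : Matrix (Fin d) (Fin d) ℝ)
    (x : EuclideanSpace ℝ (Fin d)) :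
    quadForm (B * Bᵀ)⁻¹ x ^ (-(1 : ℝ) / 2) = ‖matVec B⁻¹ x‖⁻¹ := by
  rw [quadForm_inv_mul_transpose, neg_div, Real.rpow_neg (sq_nonneg _), ← Real.sqrt_eq_rpow,
    Real.sqrt_sq (norm_nonneg _)]

theorem sqrt_det_mul_transpose (B : Matrix (Fin d) (Fin d) ℝ) :
    √(B * Bᵀ).det = |B.det| := by
  rw [det_mul, det_transpose, Real.sqrt_mul_self_eq_abs]

end MatVec

section AreaFactor

theorem matVec_transpose_cross3 (B : Matrix (Fin 3) (Fin 3) ℝ) (u w : EuclideanSpace ℝ (Fin 3)) :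
    matVec Bᵀ (cross3 (matVec B u) (matVec B w)) = B.det • cross3 u w :=
  congrArg (WithLp.toLp 2) (transpose_mulVec_crossProduct B u.ofLp w.ofLp)

variable {B : Matrix (Fin 3) (Fin 3) ℝ}

theorem norm_matVec_transpose_cross3 (hB : IsUnit B.det) (u w : EuclideanSpace ℝ (Fin 3)) :
    ‖matVec Bᵀ (cross3 u w)‖ = |B.det| * ‖cross3 (matVec B⁻¹ u) (matVec B⁻¹ w)‖ := by
  have transpose_cross :
      matVec Bᵀ (cross3 u w) = B.det • cross3 (matVec B⁻¹ u) (matVec B⁻¹ w) := by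
    simpa only [matVec_matVec_inv_s16 hB] using
      matVec_transpose_cross3 B (matVec B⁻¹ u) (matVec B⁻¹ w)
  rw [transpose_cross, norm_smul, Real.norm_eq_abs]

theorem norm_cross3_mul_sqrt_quadForm_normal (hB : IsUnit B.det)
    {u w : EuclideanSpace ℝ (Fin 3)} (huw : cross3 u w ≠ 0) :
    ‖cross3 u w‖ * √(quadForm (B * Bᵀ) (‖cross3 u w‖⁻¹ • cross3 u w)) =
      √(B * Bᵀ).det * ‖cross3 (matVec B⁻¹ u) (matVec B⁻¹ w)‖ := by
  rw [sqrt_quadForm_mul_transpose, matVec_smul, norm_smul, norm_inv, norm_norm,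
    mul_inv_cancel_left₀ (norm_ne_zero_iff.mpr huw), norm_matVec_transpose_cross3 hB,
    sqrt_det_mul_transpose]

theorem norm_cross3_div_sqrt_det (hB : IsUnit B.det)
    {u w : EuclideanSpace ℝ (Fin 3)} (huw : cross3 u w ≠ 0) :
    ‖cross3 u w‖ / √(B * Bᵀ).det =
      ‖cross3 (matVec B⁻¹ u) (matVec B⁻¹ w)‖ /
        √(quadForm (B * Bᵀ) (‖cross3 u w‖⁻¹ • cross3 u w)) := by
  have sqrt_det_ne_zero : √(B * Bᵀ).det ≠ 0 := by
    rw [sqrt_det_mul_transpose]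
    exact abs_ne_zero.mpr hB.ne_zero
  have normal_ne_zero : ‖cross3 u w‖⁻¹ • cross3 u w ≠ 0 :=
    smul_ne_zero (inv_ne_zero (norm_ne_zero_iff.mpr huw)) huw
  rw [div_eq_div_iff sqrt_det_ne_zero (sqrt_quadForm_mul_transpose_ne_zero hB normal_ne_zero),
    norm_cross3_mul_sqrt_quadForm_normal hB huw, mul_comm]

end AreaFactor

theorem anisotropic_neumann_integral_transform_3d_general
    (A B : Matrix (Fin 3) (Fin 3) ℝ) (hB : IsUnit B.det) (hBA : B * Bᵀ = A)
    (v₁ v₂ v₃ : EuclideanSpace ℝ (Fin 3)) (hind : cross3 (v₂ - v₁) (v₃ - v₁) ≠ 0)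
    (n : EuclideanSpace ℝ (Fin 3))
    (hn : n = ‖cross3 (v₂ - v₁) (v₃ - v₁)‖⁻¹ • cross3 (v₂ - v₁) (v₃ - v₁))
    (η v₁' v₂' v₃' : EuclideanSpace ℝ (Fin 3))
    (hv₁' : v₁' = matVec B⁻¹ v₁) (hv₂' : v₂' = matVec B⁻¹ v₂) (hv₃' : v₃' = matVec B⁻¹ v₃) :
    (‖cross3 (v₂ - v₁) (v₃ - v₁)‖ / (4 * π * √A.det)) *
      ∫ p in simplexT,
        (quadForm A⁻¹ (v₁ + p.1 • (v₂ - v₁) + p.2 • (v₃ - v₁) - η)) ^ (-(1 : ℝ) / 2) =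
    (1 / √(quadForm A n)) *
      ((‖cross3 (v₂' - v₁') (v₃' - v₁')‖ / (4 * π)) *
        ∫ p in simplexT,
          ‖matVec B⁻¹ (v₁ + p.1 • (v₂ - v₁) + p.2 • (v₃ - v₁) - η)‖⁻¹) := by
  have area_factor := norm_cross3_div_sqrt_det hB hind
  rw [matVec_sub, matVec_sub, ← hv₁', ← hv₂', ← hv₃', ← hn, hBA] at area_factor
  simp only [← hBA, quadForm_inv_mul_transpose_rpow_neg_half]
  rw [hBA, mul_comm (4 * π), ← div_div, area_factor]
  ring

/-- Let `A` be a symmetric positive definite `3 × 3` matrix with symmetric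
positive definite square root `B = A^{1/2}`, let `v₁, v₂, v₃` be affinely independent with
unit normal `n`, `ξ(s,t) = v₁ + s(v₂−v₁) + t(v₃−v₁)`, and `η` outside the closed triangle.
With `vᵢ' = A^{-1/2}vᵢ`, the anisotropic Neumann boundary integral over the triangle equals
`1/√(nᵀAn)` times the isotropic integral over the `A^{-1/2}`-transformed triangle. -/
theorem anisotropic_neumann_integral_transform_3d
    (A B : Matrix (Fin 3) (Fin 3) ℝ)
    (hA : A.PosDef) (hAsymm : A.IsSymm)
    (hB : B.PosDef) (hBsymm : B.IsSymm) (hBA : B * B = A)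
    (v₁ v₂ v₃ : EuclideanSpace ℝ (Fin 3)) (hind : cross3 (v₂ - v₁) (v₃ - v₁) ≠ 0)
    (n : EuclideanSpace ℝ (Fin 3))
    (hn : n = ‖cross3 (v₂ - v₁) (v₃ - v₁)‖⁻¹ • cross3 (v₂ - v₁) (v₃ - v₁))
    (η : EuclideanSpace ℝ (Fin 3))
    (hη : η ∉ (fun p : ℝ × ℝ => v₁ + p.1 • (v₂ - v₁) + p.2 • (v₃ - v₁)) '' simplexT)
    (v₁' v₂' v₃' : EuclideanSpace ℝ (Fin 3))
    (hv₁' : v₁' = matVec B⁻¹ v₁) (hv₂' : v₂' = matVec B⁻¹ v₂) (hv₃' : v₃' = matVec B⁻¹ v₃) :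
    (‖cross3 (v₂ - v₁) (v₃ - v₁)‖ / (4 * π * Real.sqrt A.det)) *
      ∫ p in simplexT,
        (quadForm A⁻¹ (v₁ + p.1 • (v₂ - v₁) + p.2 • (v₃ - v₁) - η)) ^ (-(1:ℝ)/2) =
    (1 / Real.sqrt (quadForm A n)) *
      ((‖cross3 (v₂' - v₁') (v₃' - v₁')‖ / (4 * π)) *
        ∫ p in simplexT,
          ‖matVec B⁻¹ (v₁ + p.1 • (v₂ - v₁) + p.2 • (v₃ - v₁) - η)‖⁻¹) := by
  exact anisotropic_neumann_integral_transform_3d_general A B hB.det_pos.ne'.isUnit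
    (by rw [hBsymm.eq, hBA]) v₁ v₂ v₃ hind n hn η v₁' v₂' v₃' hv₁' hv₂' hv₃'
end

section
/- Let A be a symmetric positive definite 3×3 real matrix, let v₁, v₂, v₃ ∈ ℝ³ be affinely independent, let n = ((v₂−v₁) × (v₃−v₁)) / ‖(v₂−v₁) × (v₃−v₁)‖, T = {(s,t) : s ≥ 0, t ≥ 0, s+t ≤ 1}, ξ(s,t) = v₁ + s(v₂−v₁) + t(v₃−v₁), and let η ∈ ℝ³ lie outside the closed triangle {ξ(s,t) : (s,t) ∈ T}. Set vᵢ' = A^{-1/2}vᵢ, y = A^{-1/2}η, ξ'(s,t) = v₁' + s(v₂'−v₁') + t(v₃'−v₁'), and n' = ((v₂'−v₁') × (v₃'−v₁')) / ‖(v₂'−v₁') × (v₃'−v₁')‖. Then (‖(v₂−v₁) × (v₃−v₁)‖ / (4π√(det A))) ∬_T (1−s−t) · ((ξ(s,t)−η)·n) / ((ξ(s,t)−η)ᵀ A⁻¹ (ξ(s,t)−η))^{3/2} ds dt = (‖(v₂'−v₁') × (v₃'−v₁')‖ / (4π)) ∬_T (1−s−t) · ((ξ'(s,t)−y)·n') /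 ‖ξ'(s,t)−y‖³ ds dt; that is, the anisotropic Dirichlet boundary integral of the barycentric hat function of v₁ over the triangle equals the corresponding isotropic integral over the A^{-1/2}-transformed triangle. -/
open Matrix Real MeasureTheory
open scoped RealInnerProductSpace

/-!
The kernel `⟪w, c⟫ / (4π √(det A) (wᵀ A⁻¹ w)^{3/2})` is invariant under congruence: a linear map `M`
with `0 < det M` sends `w` to `M w`, `A` to `M A Mᵀ` and an area vector `c = a × b` to `M a × M b`.
The quadratic form is then unchanged, while the triple product `w · (a × b)` and `√(det A)` are both
multiplied by `det M`. If `A = B Bᵀ`, then `M = B⁻¹` turns `A` into the identity. Both integrals are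
taken over the same parameter domain, so the equality holds already between the integrands.
-/

/-- The double-layer kernel of the operator `div (A ∇ ·)` on `ℝ³`: up to sign, the derivative along
the conormal `A c` of its fundamental solution `w ↦ (4π √(det A) (wᵀ A⁻¹ w)^{1/2})⁻¹`. The vector
`c` is not normalized, so that it can carry the area element of a parametrized surface. -/
noncomputable def doubleLayerKernel (A : Matrix (Fin 3) (Fin 3) ℝ)
    (w c : EuclideanSpace ℝ (Fin 3)) : ℝ :=
  ⟪w, c⟫ / (4 * π * √A.det * quadForm A⁻¹ w ^ ((3 : ℝ) / 2))

section QuadForm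

variable {d : ℕ}

theorem quadForm_eq_dotProduct_mulVec (M : Matrix (Fin d) (Fin d) ℝ)
    (x : EuclideanSpace ℝ (Fin d)) : quadForm M x = x.ofLp ⬝ᵥ M *ᵥ x.ofLp := by
  simp only [quadForm, dotProduct, mulVec, Finset.mul_sum, mul_assoc]

theorem quadForm_one (x : EuclideanSpace ℝ (Fin d)) : quadForm 1 x = ‖x‖ ^ 2 := by
  rw [quadForm_eq_dotProduct_mulVec, one_mulVec, EuclideanSpace.real_norm_sq_eq]
  simp only [dotProduct, sq]

theorem quadForm_matVec (N M : Matrix (Fin d) (Fin d) ℝ) (x : EuclideanSpace ℝ (Fin d)) :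
    quadForm N (matVec M x) = quadForm (Mᵀ * N * M) x := by
  simp only [quadForm_eq_dotProduct_mulVec, matVec, ofLp_toLpLin, toLin'_apply]
  rw [← mulVec_mulVec, ← mulVec_mulVec, dotProduct_mulVec _ Mᵀ, vecMul_transpose]

theorem quadForm_inv_congruence_matVec (A : Matrix (Fin d) (Fin d) ℝ)
    {M : Matrix (Fin d) (Fin d) ℝ} (hM : IsUnit M.det) (x : EuclideanSpace ℝ (Fin d)) :
    quadForm (M * A * Mᵀ)⁻¹ (matVec M x) = quadForm A⁻¹ x := by
  have hMt : IsUnit Mᵀ.det := by rwa [det_transpose]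
  rw [quadForm_matVec, Matrix.mul_inv_rev, Matrix.mul_inv_rev,
    mul_nonsing_inv_cancel_left _ _ hMt, nonsing_inv_mul_cancel_right _ _ hM]

end QuadForm

theorem inner_cross3_eq_det (w a b : EuclideanSpace ℝ (Fin 3)) :
    ⟪w, cross3 a b⟫ = (Matrix.of ![w.ofLp, a.ofLp, b.ofLp]).det := by
  rw [EuclideanSpace.inner_eq_star_dotProduct, star_trivial, dotProduct_comm]
  exact triple_product_eq_det _ _ _

theorem inner_matVec_cross3_matVec (M : Matrix (Fin 3) (Fin 3) ℝ)
    (w a b : EuclideanSpace ℝ (Fin 3)) :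
    ⟪matVec M w, cross3 (matVec M a) (matVec M b)⟫ = M.det * ⟪w, cross3 a b⟫ := by
  have rows_mul_transpose : Matrix.of ![(matVec M w).ofLp, (matVec M a).ofLp, (matVec M b).ofLp] =
      Matrix.of ![w.ofLp, a.ofLp, b.ofLp] * Mᵀ := by
    ext i j
    fin_cases i <;> simp [matVec, mul_apply, mulVec, dotProduct, mul_comm]
  rw [inner_cross3_eq_det, inner_cross3_eq_det, rows_mul_transpose, det_mul, det_transpose,
    mul_comm]

theorem inv_congruence_mul_transpose_self {ι R : Type*} [Fintype ι] [DecidableEq ι] [CommRing R]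
    {B : Matrix ι ι R} (hB : IsUnit B.det) : B⁻¹ * (B * Bᵀ) * B⁻¹ᵀ = 1 := by
  have hBt : IsUnit Bᵀ.det := by rwa [det_transpose]
  rw [nonsing_inv_mul_cancel_left _ _ hB, transpose_nonsing_inv, mul_nonsing_inv _ hBt]

theorem sqrt_det_congruence {ι : Type*} [Fintype ι] [DecidableEq ι] (A : Matrix ι ι ℝ)
    {M : Matrix ι ι ℝ} (hM : 0 ≤ M.det) : √(M * A * Mᵀ).det = M.det * √A.det := by
  rw [det_mul, det_mul, det_transpose, mul_right_comm, Real.sqrt_mul (mul_self_nonneg _),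
    Real.sqrt_mul_self hM]

theorem doubleLayerKernel_congruence_matVec (A : Matrix (Fin 3) (Fin 3) ℝ)
    {M : Matrix (Fin 3) (Fin 3) ℝ} (hM : 0 < M.det) (w a b : EuclideanSpace ℝ (Fin 3)) :
    doubleLayerKernel (M * A * Mᵀ) (matVec M w) (cross3 (matVec M a) (matVec M b)) =
      doubleLayerKernel A w (cross3 a b) := by
  rw [doubleLayerKernel, inner_matVec_cross3_matVec, sqrt_det_congruence A hM.le,
    quadForm_inv_congruence_matVec A hM.ne'.isUnit, mul_left_comm (4 * π), mul_assoc M.det,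
    mul_div_mul_left _ _ hM.ne', doubleLayerKernel]

section Integral

variable {α : Type*} [MeasurableSpace α] (μ : Measure α) (f : α → ℝ)
  (x : α → EuclideanSpace ℝ (Fin 3)) {n c : EuclideanSpace ℝ (Fin 3)}

theorem integral_doubleLayerKernel (A : Matrix (Fin 3) (Fin 3) ℝ) (hn : ‖c‖ • n = c) :
    ∫ p, f p * doubleLayerKernel A (x p) c ∂μ =
      ‖c‖ / (4 * π * √A.det) * ∫ p, f p * ⟪x p, n⟫ / quadForm A⁻¹ (x p) ^ ((3 : ℝ) / 2) ∂μ := by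
  rw [← integral_const_mul]
  congr with p
  have inner_area_normal : ⟪x p, c⟫ = ‖c‖ * ⟪x p, n⟫ := by rw [← real_inner_smul_right, hn]
  rw [doubleLayerKernel, inner_area_normal]
  ring

theorem integral_doubleLayerKernel_one (hn : ‖c‖ • n = c) :
    ∫ p, f p * doubleLayerKernel 1 (x p) c ∂μ =
      ‖c‖ / (4 * π) * ∫ p, f p * ⟪x p, n⟫ / ‖x p‖ ^ 3 ∂μ := by
  have quadForm_rpow (w : EuclideanSpace ℝ (Fin 3)) :
      quadForm 1 w ^ ((3 : ℝ) / 2) = ‖w‖ ^ 3 := by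
    rw [quadForm_one, rpow_div_two_eq_sqrt _ (sq_nonneg _), sqrt_sq (norm_nonneg _), rpow_ofNat]
  simp only [integral_doubleLayerKernel μ f x 1 hn, det_one, sqrt_one, mul_one, inv_one,
    quadForm_rpow]

end Integral

theorem anisotropic_dirichlet_integral_transform_3d_general
    {A B : Matrix (Fin 3) (Fin 3) ℝ} (hB : 0 < B.det) (hBA : B * Bᵀ = A)
    (S : Set (ℝ × ℝ)) (f : ℝ × ℝ → ℝ)
    {v₁ v₂ v₃ n η v₁' v₂' v₃' y n' : EuclideanSpace ℝ (Fin 3)}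
    (hn : ‖cross3 (v₂ - v₁) (v₃ - v₁)‖ • n = cross3 (v₂ - v₁) (v₃ - v₁))
    (hv₁' : v₁' = matVec B⁻¹ v₁) (hv₂' : v₂' = matVec B⁻¹ v₂) (hv₃' : v₃' = matVec B⁻¹ v₃)
    (hy : y = matVec B⁻¹ η)
    (hn' : ‖cross3 (v₂' - v₁') (v₃' - v₁')‖ • n' = cross3 (v₂' - v₁') (v₃' - v₁')) :
    (‖cross3 (v₂ - v₁) (v₃ - v₁)‖ / (4 * π * √A.det)) *
      ∫ p in S,
        f p * ⟪v₁ + p.1 • (v₂ - v₁) + p.2 • (v₃ - v₁) - η, n⟫ /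
          (quadForm A⁻¹ (v₁ + p.1 • (v₂ - v₁) + p.2 • (v₃ - v₁) - η)) ^ ((3 : ℝ) / 2) =
    (‖cross3 (v₂' - v₁') (v₃' - v₁')‖ / (4 * π)) *
      ∫ p in S,
        f p * ⟪v₁' + p.1 • (v₂' - v₁') + p.2 • (v₃' - v₁') - y, n'⟫ /
          ‖v₁' + p.1 • (v₂' - v₁') + p.2 • (v₃' - v₁') - y‖ ^ 3 := by
  have inv_congruence : B⁻¹ * A * B⁻¹ᵀ = 1 := by
    rw [← hBA, inv_congruence_mul_transpose_self hB.ne'.isUnit]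
  have inv_det_pos : 0 < B⁻¹.det := by
    rw [det_nonsing_inv, Ring.inverse_eq_inv']
    exact inv_pos.mpr hB
  have edge₂ : v₂' - v₁' = matVec B⁻¹ (v₂ - v₁) := by
    simp only [hv₁', hv₂', matVec, map_sub]
  have edge₃ : v₃' - v₁' = matVec B⁻¹ (v₃ - v₁) := by
    simp only [hv₁', hv₃', matVec, map_sub]
  have point (p : ℝ × ℝ) : v₁' + p.1 • (v₂' - v₁') + p.2 • (v₃' - v₁') - y =
      matVec B⁻¹ (v₁ + p.1 • (v₂ - v₁) + p.2 • (v₃ - v₁) - η) := by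
    simp only [hv₁', hv₂', hv₃', hy, matVec, map_add, map_sub, map_smul]
  rw [← integral_doubleLayerKernel _ f _ A hn, ← integral_doubleLayerKernel_one _ f _ hn']
  congr with p
  rw [point, edge₂, edge₃, ← inv_congruence, doubleLayerKernel_congruence_matVec A inv_det_pos]

/-- Let `A` be a symmetric positive definite `3 × 3` matrix with symmetric
positive definite square root `B = A^{1/2}`, let `v₁, v₂, v₃` be affinely independent with
unit normal `n`, `ξ(s,t) = v₁ + s(v₂−v₁) + t(v₃−v₁)`, and `η` outside the closed triangle.
With `vᵢ' = A^{-1/2}vᵢ`, `y = A^{-1/2}η`, `ξ'(s,t) = v₁' + s(v₂'−v₁') + t(v₃'−v₁')` and unit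
normal `n'` of the transformed triangle, the anisotropic Dirichlet boundary integral of the
barycentric hat function of `v₁` over the triangle equals the corresponding isotropic integral
over the `A^{-1/2}`-transformed triangle. -/
theorem anisotropic_dirichlet_integral_transform_3d
    (A B : Matrix (Fin 3) (Fin 3) ℝ)
    (hA : A.PosDef) (hAsymm : A.IsSymm)
    (hB : B.PosDef) (hBsymm : B.IsSymm) (hBA : B * B = A)
    (v₁ v₂ v₃ : EuclideanSpace ℝ (Fin 3)) (hind : cross3 (v₂ - v₁) (v₃ - v₁) ≠ 0)
    (n : EuclideanSpace ℝ (Fin 3))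
    (hn : n = ‖cross3 (v₂ - v₁) (v₃ - v₁)‖⁻¹ • cross3 (v₂ - v₁) (v₃ - v₁))
    (η : EuclideanSpace ℝ (Fin 3))
    (hη : η ∉ (fun p : ℝ × ℝ => v₁ + p.1 • (v₂ - v₁) + p.2 • (v₃ - v₁)) '' simplexT)
    (v₁' v₂' v₃' y : EuclideanSpace ℝ (Fin 3))
    (hv₁' : v₁' = matVec B⁻¹ v₁) (hv₂' : v₂' = matVec B⁻¹ v₂) (hv₃' : v₃' = matVec B⁻¹ v₃)
    (hy : y = matVec B⁻¹ η)
    (n' : EuclideanSpace ℝ (Fin 3))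
    (hn' : n' = ‖cross3 (v₂' - v₁') (v₃' - v₁')‖⁻¹ • cross3 (v₂' - v₁') (v₃' - v₁')) :
    (‖cross3 (v₂ - v₁) (v₃ - v₁)‖ / (4 * π * Real.sqrt A.det)) *
      ∫ p in simplexT,
        (1 - p.1 - p.2) * ⟪v₁ + p.1 • (v₂ - v₁) + p.2 • (v₃ - v₁) - η, n⟫ /
          (quadForm A⁻¹ (v₁ + p.1 • (v₂ - v₁) + p.2 • (v₃ - v₁) - η)) ^ ((3:ℝ)/2) =
    (‖cross3 (v₂' - v₁') (v₃' - v₁')‖ / (4 * π)) *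
      ∫ p in simplexT,
        (1 - p.1 - p.2) * ⟪v₁' + p.1 • (v₂' - v₁') + p.2 • (v₃' - v₁') - y, n'⟫ /
          ‖v₁' + p.1 • (v₂' - v₁') + p.2 • (v₃' - v₁') - y‖ ^ 3 := by
  exact anisotropic_dirichlet_integral_transform_3d_general hB.det_pos (by rw [hBsymm.eq, hBA])
    simplexT (fun p => 1 - p.1 - p.2) (hn ▸ NormedSpace.norm_smul_normalize _) hv₁' hv₂' hv₃' hy
    (hn' ▸ NormedSpace.norm_smul_normalize _)
end
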